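/- Let ‖·‖ be a norm on ℝ^p with polytope unit ball. The set of matrices X ∈ ℝ^{n×p} for which there exists y ∈ ℝ^n with a non-unique minimizer of b ↦ (1/2)‖y − Xb‖₂² + ‖b‖ has Lebesgue measure zero in ℝ^{n×p}. -/

import Mathlib

open Finset Matrix MeasureTheory

structure IsNorm {p : ℕ} (N : (Fin p → ℝ) → ℝ) : Prop where
  nonneg : ∀ x, 0 ≤ N x
  eq_zero_iff : ∀ x, N x = 0 ↔ x = 0
  smul : ∀ (c : ℝ) (x), N (c • x) = |c| * N x
  triangle : ∀ x y, N (x + y) ≤ N x + N y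

noncomputable def obj {n p : ℕ} (X : Matrix (Fin n) (Fin p) ℝ) (N : (Fin p → ℝ) → ℝ)
    (y : Fin n → ℝ) (b : Fin p → ℝ) : ℝ :=
  (1/2) * ∑ i, (y i - X.mulVec b i)^2 + N b

/-!
Two minimizers for the same design `L` and response `y` have the same fit, hence the same residual
`r`. Optimality says that `φ = ⟪r, L ·⟫` is dominated by the penalty `N` and agrees with `N` at both
minimizers. So both lie in the cone over the face `B = {v | φ v = 1}` of the unit ball, and their
difference lies in the direction of `B` and in the kernel of `L`. If `L` is injective on that
direction, the minimizers coincide. If `L` maps it onto the whole response space, then `r`, being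
orthogonal to the image, vanishes, so `N` vanishes at both minimizers and they are zero. One of
these holds for every face simultaneously and almost every `L`: there are finitely many faces, and
adding `t` times a suitable design to `L` restores full rank on a given subspace for all but
finitely many `t`, by finiteness of the spectrum.
-/

open scoped RealInnerProductSpace

section Sublinear

variable {E : Type*} [AddCommGroup E] [Module ℝ E] {N : E → ℝ}

/-- Sublinear functionals, which include the gauges of convex bodies that are not symmetric about
the origin. Homogeneity is only required for positive scalars. -/
structure IsSublinear (N : E → ℝ) : Prop where
  smul_of_pos : ∀ ⦃c : ℝ⦄, 0 < c → ∀ x, N (c • x) = c * N x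
  add_le : ∀ x y, N (x + y) ≤ N x + N y

theorem IsSublinear.map_zero (hN : IsSublinear N) : N 0 = 0 := by
  have h := hN.smul_of_pos two_pos 0
  rw [smul_zero] at h
  linarith

theorem IsSublinear.convexOn (hN : IsSublinear N) : ConvexOn ℝ Set.univ N :=
  convexOn_iff_forall_pos.2 ⟨convex_univ, fun x _ y _ a b ha hb _ => by
    simpa only [hN.smul_of_pos ha, hN.smul_of_pos hb, smul_eq_mul] using hN.add_le (a • x) (b • y)⟩

theorem IsNorm.isSublinear {p : ℕ} {N : (Fin p → ℝ) → ℝ} (hN : IsNorm N) : IsSublinear N where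
  smul_of_pos c hc x := by rw [hN.smul, abs_of_pos hc]
  add_le := hN.triangle

theorem IsSublinear.pos_of_sublevel_eq_convexHull (hN : IsSublinear N) {A : Set E} (hA : A.Finite)
    (hB : {x | N x ≤ 1} = convexHull ℝ A) {x : E} (hx : x ≠ 0) : 0 < N x := by
  by_contra! hNx
  obtain ⟨f, hf⟩ := Module.Projective.exists_dual_ne_zero ℝ hx
  have hfx : 0 < |f x| := abs_pos.2 hf
  have hbdd : Bornology.IsBounded (f '' convexHull ℝ A) := by
    rw [f.image_convexHull, isBounded_convexHull]
    exact (hA.image f).isBounded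
  obtain ⟨R, hR⟩ := hbdd.exists_norm_le
  have hray : ∀ t : ℝ, 0 < t → t * |f x| ≤ R := fun t ht => by
    have hmem : t • x ∈ convexHull ℝ A := by
      rw [← hB, Set.mem_ofPred_eq, hN.smul_of_pos ht]
      exact (mul_nonpos_of_nonneg_of_nonpos ht.le hNx).trans zero_le_one
    simpa [abs_of_pos ht] using hR _ (Set.mem_image_of_mem f hmem)
  have hR₀ : 0 < R := by linarith [hray 1 one_pos]
  have hfar := hray ((R + 1) / |f x|) (by positivity)
  rw [div_mul_cancel₀ _ hfx.ne'] at hfar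
  linarith

end Sublinear

section Face

variable {E : Type*} [AddCommGroup E] [Module ℝ E] {A : Set E} {φ : E →ₗ[ℝ] ℝ} {x : E}

theorem mem_convexHull_sep_apply_eq {c : ℝ} (hφ : ∀ v ∈ A, φ v ≤ c)
    (hx : x ∈ convexHull ℝ A) (hφx : φ x = c) : x ∈ convexHull ℝ {v ∈ A | φ v = c} := by
  let S : Set E := {z | φ z ≤ c ∧ (φ z = c → z ∈ convexHull ℝ {v ∈ A | φ v = c})}
  have hAS : A ⊆ S := fun v hv => ⟨hφ v hv, fun h => subset_convexHull ℝ _ ⟨hv, h⟩⟩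
  have hS : Convex ℝ S := by
    refine convex_iff_forall_pos.2 fun x hx y hy a b ha hb hab => ?_
    have hax : a * φ x ≤ a * c := by gcongr; exact hx.1
    have hby : b * φ y ≤ b * c := by gcongr; exact hy.1
    have hc : a * c + b * c = c := by rw [← add_mul, hab, one_mul]
    have hφxy : φ (a • x + b • y) = a * φ x + b * φ y := by simp
    refine ⟨by linarith, fun h => ?_⟩
    have hφx : φ x = c := mul_left_cancel₀ ha.ne' (by linarith)
    have hφy : φ y = c := mul_left_cancel₀ hb.ne' (by linarith)
    exact convex_convexHull ℝ _ (hx.2 hφx) (hy.2 hφy) ha.le hb.le hab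
  exact (convexHull_min hAS hS hx).2 hφx

theorem vectorSpan_le_ker_of_forall_apply_eq {c : ℝ} (hφ : ∀ v ∈ A, φ v = c) :
    vectorSpan ℝ A ≤ LinearMap.ker φ := by
  rw [vectorSpan_def, Submodule.span_le]
  rintro _ ⟨u, hu, v, hv, rfl⟩
  simp [hφ u hu, hφ v hv]

theorem mem_vectorSpan_of_mem_span_of_apply_eq_zero (hφ : ∀ v ∈ A, φ v = 1)
    (hx : x ∈ Submodule.span ℝ A) (hφx : φ x = 0) : x ∈ vectorSpan ℝ A := by
  rcases A.eq_empty_or_nonempty with rfl | ⟨a, ha⟩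
  · simpa using hx
  suffices ∀ z ∈ Submodule.span ℝ A, z - φ z • a ∈ vectorSpan ℝ A by
    simpa [hφx] using this x hx
  intro z hz
  induction hz using Submodule.span_induction with
  | mem v hv => simpa [hφ v hv] using vsub_mem_vectorSpan ℝ hv ha
  | zero => simp
  | add u v _ _ hu hv =>
    convert add_mem hu hv using 1
    rw [map_add]
    module
  | smul t u _ hu =>
    convert Submodule.smul_mem _ t hu using 1
    rw [map_smul]
    module

theorem IsSublinear.mem_span_face {N : E → ℝ} (hN : IsSublinear N)
    (hB : {x | N x ≤ 1} = convexHull ℝ A) (hφN : ∀ b, φ b ≤ N b) (hx : 0 < N x)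
    (hφx : φ x = N x) : x ∈ Submodule.span ℝ {v ∈ A | φ v = 1} := by
  have hφA : ∀ v ∈ A, φ v ≤ 1 := fun v hv =>
    (hφN v).trans (hB.ge (subset_convexHull ℝ A hv))
  have hball : (N x)⁻¹ • x ∈ convexHull ℝ A := by
    rw [← hB, Set.mem_ofPred_eq, hN.smul_of_pos (inv_pos.2 hx), inv_mul_cancel₀ hx.ne']
  have hlevel : φ ((N x)⁻¹ • x) = 1 := by
    rw [map_smul, hφx, smul_eq_mul, inv_mul_cancel₀ hx.ne']
  have hspan := affineSpan_subset_span (convexHull_subset_affineSpan _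
    (mem_convexHull_sep_apply_eq hφA hball hlevel))
  rwa [SetLike.mem_coe, Submodule.smul_mem_iff _ (inv_ne_zero hx.ne')] at hspan

end Face

section FullRank

variable {E F : Type*} [AddCommGroup E] [Module ℝ E] [AddCommGroup F] [Module ℝ F]

/-- The linear map `L` has the largest possible rank on the subspace `W`: it is injective on `W` or
maps `W` onto the codomain. -/
def FullRankOn (L : E →ₗ[ℝ] F) (W : Submodule ℝ E) : Prop :=
  Disjoint W (LinearMap.ker L) ∨ W.map L = ⊤

variable {M : Type*} [NormedAddCommGroup M] [NormedSpace ℝ M] [FiniteDimensional ℝ M]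
  [MeasurableSpace M] [BorelSpace M] (μ : Measure M) [μ.IsAddHaarMeasure]

theorem ae_isUnit_of_apply_eq_one {U : Type*} [AddCommGroup U] [Module ℝ U] [FiniteDimensional ℝ U]
    (D : M →ₗ[ℝ] Module.End ℝ U) {x₀ : M} (hx₀ : D x₀ = 1) : ∀ᵐ x ∂μ, IsUnit (D x) := by
  have hmeas : MeasurableSet {x | IsUnit (D x)} := by
    let b := Module.finBasis ℝ U
    have hdet : Continuous fun x => (LinearMap.toMatrix b b (D x)).det :=
      ((LinearMap.toMatrix b b).toLinearMap ∘ₗ D).continuous_of_finiteDimensional.matrix_det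
    simp only [LinearMap.isUnit_iff_isUnit_det, ← LinearMap.det_toMatrix b, isUnit_iff_ne_zero]
    exact (isOpen_ne_fun hdet continuous_const).measurableSet
  refine ae_mem_of_ae_add_linearMap_mem (LinearMap.toSpanSingleton ℝ M x₀) volume μ hmeas
    fun x => ?_
  have hfin : (spectrum ℝ (-D x)).Finite := Module.End.finite_spectrum _
  filter_upwards [hfin.countable.ae_notMem volume] with t ht
  change IsUnit (D (x + t • x₀))
  simpa [spectrum.mem_iff, hx₀, Algebra.algebraMap_eq_smul_one, add_comm] using ht

variable [FiniteDimensional ℝ F] {Φ : M →ₗ[ℝ] E →ₗ[ℝ] F}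
  (W : Submodule ℝ E) [FiniteDimensional ℝ W]

theorem ae_disjoint_ker (hΦ : Function.Surjective Φ)
    (h : Module.finrank ℝ W ≤ Module.finrank ℝ F) :
    ∀ᵐ x ∂μ, Disjoint W (LinearMap.ker (Φ x)) := by
  obtain ⟨J, hJ⟩ := finrank_le_iff_exists_linearMap.1 h
  obtain ⟨P, hP⟩ := J.exists_leftInverse_of_injective (LinearMap.ker_eq_bot.2 hJ)
  obtain ⟨J', hJ'⟩ := J.exists_extend
  obtain ⟨x₀, hx₀⟩ := hΦ J'
  let D : M →ₗ[ℝ] Module.End ℝ W := P.compRight ℝ ∘ₗ W.subtype.lcomp ℝ F ∘ₗ Φ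
  have hD₀ : D x₀ = 1 := by
    change P ∘ₗ Φ x₀ ∘ₗ W.subtype = 1
    rw [hx₀, hJ', hP, Module.End.one_eq_id]
  filter_upwards [ae_isUnit_of_apply_eq_one μ D hD₀] with x hx
  refine Submodule.disjoint_def.2 fun w hw hxw => ?_
  have hDw : D x ⟨w, hw⟩ = 0 := by
    change P (Φ x w) = 0
    rw [LinearMap.mem_ker.1 hxw, map_zero]
  simpa using LinearMap.ker_eq_bot'.1 ((LinearMap.isUnit_iff_ker_eq_bot _).1 hx) _ hDw

theorem ae_map_eq_top (hΦ : Function.Surjective Φ)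
    (h : Module.finrank ℝ F ≤ Module.finrank ℝ W) :
    ∀ᵐ x ∂μ, W.map (Φ x) = ⊤ := by
  obtain ⟨S, hS⟩ := finrank_le_iff_exists_linearMap.1 h
  obtain ⟨Q, hQ⟩ := S.exists_leftInverse_of_injective (LinearMap.ker_eq_bot.2 hS)
  obtain ⟨Q', hQ'⟩ := Q.exists_extend
  obtain ⟨x₀, hx₀⟩ := hΦ Q'
  let D : M →ₗ[ℝ] Module.End ℝ F := (W.subtype ∘ₗ S).lcomp ℝ F ∘ₗ Φ
  have hD₀ : D x₀ = 1 := by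
    change Φ x₀ ∘ₗ W.subtype ∘ₗ S = 1
    rw [hx₀, ← LinearMap.comp_assoc, hQ', hQ, Module.End.one_eq_id]
  filter_upwards [ae_isUnit_of_apply_eq_one μ D hD₀] with x hx
  refine Submodule.eq_top_iff'.2 fun z => ?_
  obtain ⟨u, rfl⟩ := LinearMap.range_eq_top.1 ((LinearMap.isUnit_iff_range_eq_top _).1 hx) z
  exact Submodule.mem_map_of_mem (S u).2

theorem ae_fullRankOn (hΦ : Function.Surjective Φ) : ∀ᵐ x ∂μ, FullRankOn (Φ x) W := by
  rcases le_total (Module.finrank ℝ W) (Module.finrank ℝ F) with h | h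
  · exact (ae_disjoint_ker μ W hΦ h).mono fun _ => .inl
  · exact (ae_map_eq_top μ W hΦ h).mono fun _ => .inr

end FullRank

section PenalizedLeastSquares

variable {E F : Type*} [AddCommGroup E] [Module ℝ E] [NormedAddCommGroup F] [InnerProductSpace ℝ F]
  {L : E →ₗ[ℝ] F} {N : E → ℝ} {y : F} {β β₁ β₂ : E}

/-- The penalized least squares objective with design `L`, penalty `N` and response `y`: the
coordinate-free form of `obj`. -/
noncomputable def penalizedLeastSquares (L : E →ₗ[ℝ] F) (N : E → ℝ) (y : F) (b : E) : ℝ :=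
  ‖y - L b‖ ^ 2 / 2 + N b

theorem inner_residual_le_of_isMinOn (hN : ConvexOn ℝ Set.univ N)
    (hβ : IsMinOn (penalizedLeastSquares L N y) Set.univ β) (b : E) :
    ⟪y - L β, L (b - β)⟫ ≤ N b - N β := by
  set r := y - L β
  set q := L (b - β)
  have hstep : ∀ t ∈ Set.Ioc (0 : ℝ) 1, ⟪r, q⟫ ≤ N b - N β + t * (‖q‖ ^ 2 / 2) := by
    rintro t ⟨ht₀, ht₁⟩
    have hmin := isMinOn_univ_iff.1 hβ (β + t • (b - β))
    have hconv : N (β + t • (b - β)) ≤ (1 - t) * N β + t * N b := by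
      have h := hN.2 (Set.mem_univ β) (Set.mem_univ b) (sub_nonneg.2 ht₁) ht₀.le
        (sub_add_cancel 1 t)
      rwa [show (1 - t) • β + t • b = β + t • (b - β) by module] at h
    have hres : y - L (β + t • (b - β)) = r - t • q := by
      rw [map_add, map_smul, sub_add_eq_sub_sub]
    simp only [penalizedLeastSquares, hres] at hmin
    rw [norm_sub_sq_real r, real_inner_smul_right, norm_smul, mul_pow, Real.norm_eq_abs,
      sq_abs] at hmin
    refine le_of_mul_le_mul_left ?_ ht₀
    linarith
  have hlim : Filter.Tendsto (fun t => N b - N β + t * (‖q‖ ^ 2 / 2)) (nhdsWithin 0 (Set.Ioi 0))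
      (nhds (N b - N β)) :=
    tendsto_nhdsWithin_of_tendsto_nhds (Continuous.tendsto' (by fun_prop) _ _ (by simp))
  exact ge_of_tendsto hlim (Filter.eventually_of_mem (Ioc_mem_nhdsGT one_pos) hstep)

theorem apply_eq_of_isMinOn (hN : ConvexOn ℝ Set.univ N)
    (h₁ : IsMinOn (penalizedLeastSquares L N y) Set.univ β₁)
    (h₂ : IsMinOn (penalizedLeastSquares L N y) Set.univ β₂) : L β₁ = L β₂ := by
  have hsum : ⟪y - L β₁, L (β₂ - β₁)⟫ + ⟪y - L β₂, L (β₁ - β₂)⟫ = ‖L β₁ - L β₂‖ ^ 2 := by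
    rw [← real_inner_self_eq_norm_sq, map_sub, map_sub, ← neg_sub (L β₁) (L β₂),
      inner_neg_right, neg_add_eq_sub, ← inner_sub_left, sub_sub_sub_cancel_left]
  have hsq : ‖L β₁ - L β₂‖ ^ 2 ≤ 0 := by
    linarith [inner_residual_le_of_isMinOn hN h₁ β₂, inner_residual_le_of_isMinOn hN h₂ β₁]
  simpa [sub_eq_zero] using le_antisymm hsq (sq_nonneg _)

theorem IsSublinear.inner_residual_self_eq (hN : IsSublinear N)
    (hβ : IsMinOn (penalizedLeastSquares L N y) Set.univ β) : ⟪y - L β, L β⟫ = N β := by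
  have hdouble := inner_residual_le_of_isMinOn hN.convexOn hβ ((2 : ℝ) • β)
  have hzero := inner_residual_le_of_isMinOn hN.convexOn hβ 0
  rw [hN.smul_of_pos two_pos, two_smul, add_sub_cancel_right] at hdouble
  rw [zero_sub, map_neg, inner_neg_right, hN.map_zero] at hzero
  linarith

theorem IsSublinear.inner_residual_le (hN : IsSublinear N)
    (hβ : IsMinOn (penalizedLeastSquares L N y) Set.univ β) (b : E) : ⟪y - L β, L b⟫ ≤ N b := by
  have h := inner_residual_le_of_isMinOn hN.convexOn hβ b
  rw [map_sub, inner_sub_right, hN.inner_residual_self_eq hβ] at h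
  linarith

theorem IsSublinear.eq_of_isMinOn_of_fullRankOn (hN : IsSublinear N) {A : Set E} (hA : A.Finite)
    (hB : {x | N x ≤ 1} = convexHull ℝ A) (hL : ∀ B ⊆ A, FullRankOn L (vectorSpan ℝ B))
    (h₁ : IsMinOn (penalizedLeastSquares L N y) Set.univ β₁)
    (h₂ : IsMinOn (penalizedLeastSquares L N y) Set.univ β₂) : β₁ = β₂ := by
  have hfit : L β₁ = L β₂ := apply_eq_of_isMinOn hN.convexOn h₁ h₂
  let φ : E →ₗ[ℝ] ℝ := innerₛₗ ℝ (y - L β₁) ∘ₗ L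
  have hφN : ∀ b, φ b ≤ N b := hN.inner_residual_le h₁
  have hφ₁ : φ β₁ = N β₁ := hN.inner_residual_self_eq h₁
  have hφ₂ : φ β₂ = N β₂ := by
    change ⟪y - L β₁, L β₂⟫ = N β₂
    rw [hfit, hN.inner_residual_self_eq h₂]
  let B : Set E := {v ∈ A | φ v = 1}
  have hspan : ∀ β, φ β = N β → β ∈ Submodule.span ℝ B := fun β hβ => by
    rcases eq_or_ne β 0 with rfl | hβ₀
    · exact zero_mem _
    · exact hN.mem_span_face hB hφN (hN.pos_of_sublevel_eq_convexHull hA hB hβ₀) hβ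
  have hker : β₁ - β₂ ∈ LinearMap.ker L := by simp [hfit]
  have hdir : β₁ - β₂ ∈ vectorSpan ℝ B :=
    mem_vectorSpan_of_mem_span_of_apply_eq_zero (fun v hv => hv.2)
      (sub_mem (hspan β₁ hφ₁) (hspan β₂ hφ₂)) (by simp [φ, hfit])
  rcases hL B (Set.sep_subset _ _) with hinj | hsurj
  · exact sub_eq_zero.1 (Submodule.disjoint_def.1 hinj _ hdir hker)
  · have hr : y - L β₁ = 0 := by
      obtain ⟨w, hw, hLw⟩ : y - L β₁ ∈ (vectorSpan ℝ B).map L := hsurj ▸ Submodule.mem_top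
      have hφw : ⟪y - L β₁, L w⟫ = 0 := vectorSpan_le_ker_of_forall_apply_eq (φ := φ)
        (fun v hv => hv.2) hw
      rwa [hLw, inner_self_eq_zero] at hφw
    have hzero : ∀ β, φ β = N β → β = 0 := fun β hβ => by
      by_contra hβ₀
      simpa [φ, hr, ← hβ] using hN.pos_of_sublevel_eq_convexHull hA hB hβ₀
    rw [hzero β₁ hφ₁, hzero β₂ hφ₂]

end PenalizedLeastSquares

section MatrixDesign

/-- A matrix as a linear map into the Euclidean space of responses, linearly in its entries. -/
noncomputable def designMap (n p : ℕ) :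
    (Fin n → Fin p → ℝ) ≃ₗ[ℝ] (Fin p → ℝ) →ₗ[ℝ] EuclideanSpace ℝ (Fin n) :=
  Matrix.ofLinearEquiv ℝ ≪≫ₗ Matrix.toLin' ≪≫ₗ
    (LinearEquiv.refl ℝ (Fin p → ℝ)).arrowCongr (WithLp.linearEquiv 2 ℝ (Fin n → ℝ)).symm

variable {n p : ℕ} (X : Fin n → Fin p → ℝ) (N : (Fin p → ℝ) → ℝ) (y : Fin n → ℝ)

theorem designMap_apply (b : Fin p → ℝ) :
    designMap n p X b = WithLp.toLp 2 (Matrix.of X *ᵥ b) :=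
  rfl

theorem obj_eq_penalizedLeastSquares :
    obj (Matrix.of X) N y = penalizedLeastSquares (designMap n p X) N (WithLp.toLp 2 y) := by
  ext b
  rw [obj, penalizedLeastSquares, designMap_apply, ← WithLp.toLp_sub,
    EuclideanSpace.real_norm_sq_eq, one_div_mul_eq_div]
  rfl

theorem isMinOn_penalizedLeastSquares_designMap_iff {β : Fin p → ℝ} :
    IsMinOn (penalizedLeastSquares (designMap n p X) N (WithLp.toLp 2 y)) Set.univ β ↔
      ∀ b, obj (Matrix.of X) N y β ≤ obj (Matrix.of X) N y b := by
  rw [isMinOn_univ_iff, obj_eq_penalizedLeastSquares]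

end MatrixDesign

section NullSet

variable {E F M : Type*} [AddCommGroup E] [Module ℝ E]
  [NormedAddCommGroup F] [InnerProductSpace ℝ F] [FiniteDimensional ℝ F]
  [NormedAddCommGroup M] [NormedSpace ℝ M] [FiniteDimensional ℝ M] [MeasurableSpace M]
  [BorelSpace M]

theorem nonuniqueness_set_null_general (μ : Measure M) [μ.IsAddHaarMeasure]
    {Φ : M →ₗ[ℝ] E →ₗ[ℝ] F} (hΦ : Function.Surjective Φ) {N : E → ℝ} (hN : IsSublinear N)
    {A : Set E} (hA : A.Finite) (hB : {x | N x ≤ 1} = convexHull ℝ A) :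
    μ {x | ∃ (y : F) (β₁ β₂ : E), β₁ ≠ β₂ ∧
      IsMinOn (penalizedLeastSquares (Φ x) N y) Set.univ β₁ ∧
      IsMinOn (penalizedLeastSquares (Φ x) N y) Set.univ β₂} = 0 := by
  have hrank : ∀ᵐ x ∂μ, ∀ B ⊆ A, FullRankOn (Φ x) (vectorSpan ℝ B) :=
    (ae_ball_iff hA.finite_subsets.countable).2 fun B hBA =>
      have := finiteDimensional_vectorSpan_of_finite ℝ (hA.subset hBA)
      ae_fullRankOn μ (vectorSpan ℝ B) hΦ
  refine measure_mono_null ?_ (ae_iff.1 hrank)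
  rintro x ⟨y, β₁, β₂, hne, h₁, h₂⟩ hx
  exact hne (hN.eq_of_isMinOn_of_fullRankOn hA hB hx h₁ h₂)

end NullSet

theorem nonuniqueness_set_null {n p k : ℕ} (N : (Fin p → ℝ) → ℝ) (hN : IsNorm N)
    (V : Fin k → (Fin p → ℝ)) (hB : {x | N x ≤ 1} = convexHull ℝ (Set.range V)) :
    volume {X : Fin n → Fin p → ℝ |
      ∃ (y : Fin n → ℝ) (β₁ β₂ : Fin p → ℝ), β₁ ≠ β₂ ∧
        (∀ b, obj (Matrix.of X) N y β₁ ≤ obj (Matrix.of X) N y b) ∧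
        (∀ b, obj (Matrix.of X) N y β₂ ≤ obj (Matrix.of X) N y b)} = 0 := by
  refine measure_mono_null ?_ (nonuniqueness_set_null_general volume (designMap n p).surjective
    hN.isSublinear (Set.finite_range V) hB)
  simp only [← isMinOn_penalizedLeastSquares_designMap_iff]
  exact fun X ⟨y, h⟩ => ⟨WithLp.toLp 2 y, h⟩
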